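/- For every integer n ≥ 1, the Krull dimension of the ring ℂ[x_{ij}, y_{ij} (1 ≤ i,j ≤ 2n)] / I equals 2n² + 2n, where X = (x_{ij}) and Y = (y_{ij}) are the generic 2n×2n matrices, J is the standard symplectic matrix [[0, I_n],[−I_n, 0]], and I is the ideal generated by the entries of XY − YX together with the entries of XᵀJX − J and of YᵀJY − J. (This ring is the coordinate ring of the commuting variety C(Sp_{2n}) = {(a,b) ∈ Sp_{2n} × Sp_{2n} : ab = ba}, so this says dim C(Sp_{2n}) = (2n²+n) + n, i.e. the commuting probability p(Sp_{2n}) equals 1/2 + 1/(2(2n+1)).) -/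

import Mathlib

open MvPolynomial Matrix

/-- The polynomial ring `ℂ[x_{ij}, y_{ij}]` in `2 · (2n)²` variables. -/
noncomputable abbrev SpRing (n : ℕ) : Type :=
  MvPolynomial ((Fin (2 * n) × Fin (2 * n)) ⊕ (Fin (2 * n) × Fin (2 * n))) ℂ

/-- The generic matrix `X` of size `2n × 2n`, with entries the variables `x_{ij}`. -/
noncomputable def genX (n : ℕ) : Matrix (Fin (2 * n)) (Fin (2 * n)) (SpRing n) :=
  fun i j => X (Sum.inl (i, j))

/-- The generic matrix `Y` of size `2n × 2n`, with entries the variables `y_{ij}`. -/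
noncomputable def genY (n : ℕ) : Matrix (Fin (2 * n)) (Fin (2 * n)) (SpRing n) :=
  fun i j => X (Sum.inr (i, j))

/-- The standard symplectic matrix `J = [[0, I_n], [-I_n, 0]]`, as a `2n × 2n` matrix
(indices are reinterpreted via `finSumFinEquiv : Fin n ⊕ Fin n ≃ Fin (n + n)`). -/
noncomputable def sympJ (n : ℕ) (R : Type*) [CommRing R] :
    Matrix (Fin (2 * n)) (Fin (2 * n)) R :=
  Matrix.reindex
    ((finSumFinEquiv).trans (finCongr (by ring)))
    ((finSumFinEquiv).trans (finCongr (by ring)))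
    (Matrix.fromBlocks 0 1 (-1) 0)


section KrullPart

theorem aux_krull_integral {R S : Type*} [CommRing R] [CommRing S] [Algebra R S]
    [Algebra.IsIntegral R S] [FaithfulSMul R S] : ringKrullDim R = ringKrullDim S := by
  apply le_antisymm
  · apply iSup_le
    intro l
    obtain ⟨Q, -, hQ, hQl⟩ := Ideal.exists_ideal_over_prime_of_isIntegral
      (S := S) (RelSeries.head l).asIdeal ⊥ (by
        rw [← RingHom.ker_eq_comap_bot,
          (RingHom.injective_iff_ker_eq_bot _).1 (FaithfulSMul.algebraMap_injective R S)]
        exact bot_le)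
    have : Q.LiesOver (RelSeries.head l).asIdeal := ⟨hQl.symm⟩
    obtain ⟨L, hL, -⟩ := Ideal.exists_ltSeries_of_hasGoingUp (S := S) l Q
    exact le_iSup_of_le L (by rw [hL])
  · refine Order.krullDim_le_of_strictMono (PrimeSpectrum.comap (algebraMap R S)) ?_
    intro I J hIJ
    exact Ideal.IsIntegral.comap_lt_comap (R := R) (I := I.asIdeal) (J := J.asIdeal) hIJ

open scoped TensorProduct in
theorem aux_finrank_der {σ : Type} [Fintype σ] {K : Type} [Field K] [Algebra ℂ K]
    [Algebra (MvPolynomial σ ℂ) K] [IsScalarTower ℂ (MvPolynomial σ ℂ) K]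
    [FaithfulSMul (MvPolynomial σ ℂ) K] [Algebra.IsAlgebraic (MvPolynomial σ ℂ) K] :
    Module.finrank K (Derivation ℂ K K) = Fintype.card σ := by
  let P := MvPolynomial σ ℂ
  let L := FractionRing P
  let _ : Algebra L K := FractionRing.liftAlgebra P K
  have : IsScalarTower P L K := inferInstance
  have : CharZero L := charZero_of_injective_algebraMap (FaithfulSMul.algebraMap_injective ℂ L)
  have : Algebra.IsAlgebraic L K := (IsFractionRing.comap_isAlgebraic_iff (A := P) (K := L) (C := K)).1 inferInstance
  have : Algebra.FormallyEtale P L := Algebra.FormallyEtale.of_isLocalization (nonZeroDivisors P)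
  have : Algebra.FormallyEtale L K := Algebra.FormallyEtale.of_isSeparable L K
  have : Algebra.FormallyEtale P K := Algebra.FormallyEtale.comp P L K
  have e := KaehlerDifferential.tensorKaehlerEquivOfFormallyEtale ℂ P K
  have b := (Algebra.TensorProduct.basis K (KaehlerDifferential.mvPolynomialBasis ℂ σ)).map e
  have e2 := KaehlerDifferential.linearMapEquivDerivation (M := K) ℂ K
  rw [← e2.finrank_eq]
  have : Module.Finite K (Ω[K⁄ℂ]) := Module.Finite.of_basis b
  change Module.finrank K (Module.Dual K (Ω[K⁄ℂ])) = _
  rw [Subspace.dual_finrank_eq, Module.finrank_eq_card_basis b]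

theorem aux_krull_eq_finrank_der (s : ℕ) (B : Type) [CommRing B] [IsDomain B] [Algebra ℂ B]
    (K : Type) [Field K] [Algebra ℂ K] [Algebra B K] [IsFractionRing B K] [IsScalarTower ℂ B K]
    (g : MvPolynomial (Fin s) ℂ →ₐ[ℂ] B) (hg : Function.Injective g)
    (hi : g.IsIntegral) :
    ringKrullDim B = s ∧ Module.finrank K (Derivation ℂ K K) = s := by
  let _ : Algebra (MvPolynomial (Fin s) ℂ) B := g.toRingHom.toAlgebra
  let _ : Algebra (MvPolynomial (Fin s) ℂ) K := ((algebraMap B K).comp g.toRingHom).toAlgebra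
  have : IsScalarTower ℂ (MvPolynomial (Fin s) ℂ) B :=
    IsScalarTower.of_algebraMap_eq fun x => (g.commutes x).symm
  have : IsScalarTower (MvPolynomial (Fin s) ℂ) B K :=
    IsScalarTower.of_algebraMap_eq fun x => rfl
  have : IsScalarTower ℂ (MvPolynomial (Fin s) ℂ) K :=
    IsScalarTower.of_algebraMap_eq fun x => by
      rw [IsScalarTower.algebraMap_apply ℂ B K, ← g.commutes x]; rfl
  have : FaithfulSMul (MvPolynomial (Fin s) ℂ) B := (faithfulSMul_iff_algebraMap_injective _ _).2 hg
  have : FaithfulSMul (MvPolynomial (Fin s) ℂ) K := (faithfulSMul_iff_algebraMap_injective _ _).2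
    ((IsFractionRing.injective B K).comp hg)
  have : Algebra.IsIntegral (MvPolynomial (Fin s) ℂ) B := ⟨hi⟩
  have : Algebra.IsAlgebraic B K := IsLocalization.isAlgebraic K (nonZeroDivisors B)
  have : Algebra.IsAlgebraic (MvPolynomial (Fin s) ℂ) K := Algebra.IsAlgebraic.trans _ B K
  constructor
  · rw [← aux_krull_integral (R := MvPolynomial (Fin s) ℂ)]
    simp
  · rw [aux_finrank_der (σ := Fin s), Fintype.card_fin]

theorem aux_krull_domain (B : Type) [CommRing B] [IsDomain B] [Algebra ℂ B] [Algebra.FiniteType ℂ B]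
    (K : Type) [Field K] [Algebra ℂ K] [Algebra B K] [IsFractionRing B K] [IsScalarTower ℂ B K] :
    ringKrullDim B = (Module.finrank K (Derivation ℂ K K) : ℕ) := by
  obtain ⟨s, g, hg, hi⟩ := exists_integral_inj_algHom_of_fg ℂ B
  obtain ⟨h1, h2⟩ := aux_krull_eq_finrank_der s B K g hg hi
  rw [h1, h2]

theorem aux_krull_exists (A : Type) [CommRing A] [Nontrivial A] [Algebra ℂ A]
    [Algebra.FiniteType ℂ A] :
    ∃ Q : Ideal A, ∃ _ : Q.IsPrime, ringKrullDim A = ringKrullDim (A ⧸ Q) := by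
  obtain ⟨s, g, hg, hi⟩ := exists_integral_inj_algHom_of_fg ℂ A
  let _ : Algebra (MvPolynomial (Fin s) ℂ) A := g.toRingHom.toAlgebra
  have : FaithfulSMul (MvPolynomial (Fin s) ℂ) A := (faithfulSMul_iff_algebraMap_injective _ _).2 hg
  have : Algebra.IsIntegral (MvPolynomial (Fin s) ℂ) A := ⟨hi⟩
  obtain ⟨Q, -, hQ, hQl⟩ := Ideal.exists_ideal_over_prime_of_isIntegral
      (S := A) (⊥ : Ideal (MvPolynomial (Fin s) ℂ)) ⊥ (by
        rw [← RingHom.ker_eq_comap_bot, (RingHom.injective_iff_ker_eq_bot _).1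
          (FaithfulSMul.algebraMap_injective (MvPolynomial (Fin s) ℂ) A)])
  refine ⟨Q, hQ, ?_⟩
  have : FaithfulSMul (MvPolynomial (Fin s) ℂ) (A ⧸ Q) := by
    rw [faithfulSMul_iff_algebraMap_injective, RingHom.injective_iff_ker_eq_bot, ← hQl]
    ext x
    rw [RingHom.mem_ker, Ideal.mem_comap]
    exact Ideal.Quotient.eq_zero_iff_mem
  have : Algebra.IsIntegral (MvPolynomial (Fin s) ℂ) (A ⧸ Q) := inferInstance
  rw [← aux_krull_integral (R := MvPolynomial (Fin s) ℂ) (S := A),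
    ← aux_krull_integral (R := MvPolynomial (Fin s) ℂ) (S := A ⧸ Q)]

end KrullPart


section DerPart

open scoped DirectSum in
theorem aux_nabla {R : Type} [CommRing R] [IsDomain R] [IsPrincipalIdealRing R]
    [CharZero R] (hQ : ∀ n : ℕ, n ≠ 0 → IsUnit (n : R))
    {V : Type} [AddCommGroup V] [Module R V] [Module.Finite R V]
    (δ : R →+ R) (hlb : ∀ a b, δ (a * b) = a * δ b + b * δ a) (χ : R) (hχ0 : χ ≠ 0) (hχ : δ χ = 0) (hV : ∀ v : V, χ • v = 0) :
    ∃ nab : V →+ V, ∀ (f : R) (v : V), nab (f • v) = δ f • v + f • nab v := by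
  classical
  have hδ1 : δ 1 = 0 := by
    have := hlb 1 1
    simp only [one_mul] at this
    linear_combination -this
  have hpow : ∀ (x : R) (k : ℕ), δ (x ^ (k + 1)) = ((k + 1 : ℕ) : R) * x ^ k * δ x := by
    intro x k
    induction k with
    | zero => simp
    | succ k ih =>
      rw [pow_succ, hlb, ih]
      push_cast
      ring
  have hT : Module.IsTorsion R V := fun {v} =>
    ⟨⟨χ, mem_nonZeroDivisors_of_ne_zero hχ0⟩, hV v⟩
  obtain ⟨ι, _, p, hp, e, ⟨E⟩⟩ := Module.equiv_directSum_of_isTorsion hT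
  -- χ lies in each ideal
  have hmem : ∀ i, p i ^ e i ∣ χ := by
    intro i
    have h1 := hV (E.symm (DirectSum.of (fun i => R ⧸ R ∙ p i ^ e i) i (Submodule.Quotient.mk 1)))
    rw [← map_smul, LinearEquiv.map_eq_zero_iff] at h1
    have h2 := congrArg (fun z => z i) h1
    simp only [DirectSum.smul_apply, DirectSum.of_eq_same, DirectSum.zero_apply] at h2
    rw [← Submodule.Quotient.mk_smul, Submodule.Quotient.mk_eq_zero] at h2
    rw [smul_eq_mul, mul_one] at h2
    exact Ideal.mem_span_singleton.1 h2
  have hdiv : ∀ i, e i ≠ 0 → p i ∣ δ (p i) := by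
    intro i hi
    have hpr : Prime (p i) := (hp i).prime
    have hfin : FiniteMultiplicity (p i) χ :=
      FiniteMultiplicity.of_prime_left hpr hχ0
    obtain ⟨q, hq, hpq⟩ := hfin.exists_eq_pow_mul_and_not_dvd
    set a := multiplicity (p i) χ with ha
    have ha0 : a ≠ 0 := by
      intro h0
      rw [h0, pow_zero, one_mul] at hq
      exact hpq (hq ▸ (dvd_pow_self _ hi).trans (hmem i))
    obtain ⟨b, hb⟩ : ∃ b, a = b + 1 := ⟨a - 1, by omega⟩
    have h3 : δ χ = 0 := hχ
    rw [hq, hb, hlb, hpow] at h3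
    have h4 : p i ^ b * (p i * δ q + q * (((b + 1 : ℕ) : R) * δ (p i))) = 0 := by
      rw [← h3]; ring
    have h5 := (mul_eq_zero.1 h4).resolve_left (pow_ne_zero _ hpr.ne_zero)
    have h6 : p i ∣ q * (((b + 1 : ℕ) : R) * δ (p i)) := by
      refine ⟨- δ q, ?_⟩
      linear_combination h5
    rcases hpr.dvd_or_dvd h6 with h | h
    · exact absurd h hpq
    · exact (hpr.dvd_or_dvd h).resolve_left fun hc =>
        hpr.not_isUnit (isUnit_of_dvd_unit hc (hQ _ (Nat.succ_ne_zero b)))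
  have hstab : ∀ i, ∀ x ∈ (R ∙ p i ^ e i), δ x ∈ (R ∙ p i ^ e i) := by
    intro i x hx
    rcases eq_or_ne (e i) 0 with h0 | h0
    · rw [h0, pow_zero]
      exact Ideal.mem_span_singleton.2 (one_dvd _)
    obtain ⟨y, rfl⟩ := Ideal.mem_span_singleton.1 hx
    obtain ⟨z, hz⟩ := hdiv i h0
    obtain ⟨b, hb⟩ : ∃ b, e i = b + 1 := ⟨e i - 1, by omega⟩
    refine Ideal.mem_span_singleton.2 ?_
    rw [hb, hlb, hpow, hz]
    exact ⟨δ y + y * ((b + 1 : ℕ) : R) * z, by ring⟩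
  let d : ∀ i, (R ⧸ R ∙ p i ^ e i) →+ (R ⧸ R ∙ p i ^ e i) := fun i =>
    QuotientAddGroup.map (R ∙ p i ^ e i).toAddSubgroup (R ∙ p i ^ e i).toAddSubgroup
      δ (fun x hx => hstab i x hx)
  have hd : ∀ i (x : R), d i (Submodule.Quotient.mk x) = Submodule.Quotient.mk (δ x) :=
    fun i x => rfl
  have hdm : ∀ i (f : R) (x : R ⧸ R ∙ p i ^ e i), d i (f • x) = δ f • x + f • d i x := by
    intro i f x
    obtain ⟨x, rfl⟩ := Submodule.Quotient.mk_surjective _ x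
    rw [← Submodule.Quotient.mk_smul, hd, hd, ← Submodule.Quotient.mk_smul,
      ← Submodule.Quotient.mk_smul, ← Submodule.Quotient.mk_add, smul_eq_mul, hlb]
    congr 1
    simp only [smul_eq_mul]; ring
  let N := DirectSum.map d
  have hN : ∀ (f : R) v, N (f • v) = δ f • v + f • N v := by
    intro f v
    ext i : 1
    simp only [N, DirectSum.map_apply, DirectSum.smul_apply, DirectSum.add_apply, hdm]
  refine ⟨(E.symm.toLinearMap.toAddMonoidHom.comp N).comp E.toLinearMap.toAddMonoidHom, ?_⟩
  intro f v
  simp [hN]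

theorem aux_conj {ι : Type} [Fintype ι] [DecidableEq ι] {K : Type} [Field K] [CharZero K]
    (D : Derivation ℤ K K) (A : Matrix ι ι K) (hA : ∀ i, D (A.charpoly.coeff i) = 0) :
    ∃ M : Matrix ι ι K, A.map D = M * A - A * M := by
  let inst : Differential K := ⟨D⟩
  have hDD : ∀ x : K, Differential.deriv x = D x := fun x => rfl
  let δ : Polynomial K →+ Polynomial K :=
    { toFun := fun p => Differential.mapCoeffs p
      map_zero' := map_zero _
      map_add' := fun p q => map_add _ p q }
  have hδ : ∀ p, δ p = Differential.mapCoeffs p := fun p => rfl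
  let a : Module.End K (ι → K) := Matrix.toLin' A
  obtain ⟨nab, hnab⟩ := aux_nabla (R := Polynomial K) (V := Module.AEval K (ι → K) a)
    (fun n hn => by
      rw [← Polynomial.C_eq_natCast]
      exact (IsUnit.mk0 (n : K) (Nat.cast_ne_zero.2 hn)).map Polynomial.C) δ
    (fun p q => by simp only [hδ]; exact Derivation.leibniz _ p q) A.charpoly
    A.charpoly_monic.ne_zero (by
      ext i
      rw [hδ, Differential.coeff_mapCoeffs, hDD, hA, Polynomial.coeff_zero]) (by
      intro v
      apply (Module.AEval.of K (ι → K) a).symm.injective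
      rw [Module.AEval.of_symm_smul]
      have : Polynomial.aeval a A.charpoly = 0 := by
        rw [← Matrix.charpoly_toLin']
        exact LinearMap.aeval_self_charpoly _
      rw [this]; simp)
  let o := Module.AEval.of K (ι → K) a
  let n' : (ι → K) → (ι → K) := fun w => o.symm (nab (o w))
  have hadd : ∀ v w, n' (v + w) = n' v + n' w := by intro v w; simp [n']
  have hsm : ∀ (c : K) w, n' (c • w) = D c • w + c • n' w := by
    intro c w
    have := hnab (Polynomial.C c) (o w)
    simp only [n']
    rw [map_smul, ← Module.AEval.C_smul, this]
    rw [map_add, show δ (Polynomial.C c) = Polynomial.C (D c) from Differential.mapCoeffs_C c,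
      Module.AEval.C_smul, Module.AEval.C_smul]
    simp
  have hX : ∀ w, n' (A *ᵥ w) = A *ᵥ n' w := by
    intro w
    have := hnab Polynomial.X (o w)
    rw [show δ Polynomial.X = 0 from Differential.mapCoeffs_X, zero_smul, zero_add,
      Module.AEval.X_smul_of] at this
    have h2 := congrArg o.symm this
    rw [Module.AEval.of_symm_X_smul] at h2
    exact h2
  let L : (ι → K) →ₗ[K] (ι → K) :=
    { toFun := fun w => (D ∘ w) - n' w
      map_add' := by
        intro v w
        rw [hadd]
        ext i
        simp; ring
      map_smul' := by
        intro c w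
        rw [hsm]
        ext i
        simp; ring }
  have hL : ∀ w, L w = (D ∘ w) - n' w := fun w => rfl
  refine ⟨LinearMap.toMatrix' L, ?_⟩
  apply Matrix.toLin'.injective
  apply LinearMap.ext
  intro w
  rw [map_sub, Matrix.toLin'_mul, Matrix.toLin'_mul, Matrix.toLin'_toMatrix']
  simp only [LinearMap.sub_apply, LinearMap.comp_apply, Matrix.toLin'_apply]
  rw [hL, hL, hX, Matrix.mulVec_sub]
  ext i
  simp only [Matrix.mulVec, dotProduct, Matrix.map_apply, Pi.sub_apply, Function.comp_apply,
    map_sum, Derivation.leibniz, Finset.sum_add_distrib, smul_eq_mul]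
  have : ∑ x, w x * D (A i x) = ∑ x, D (A i x) * w x := Finset.sum_congr rfl fun _ _ => mul_comm _ _
  rw [this]; ring

end DerPart

section SpPart

theorem aux_map_mul {ι : Type} [Fintype ι] {K : Type} [Field K] [Algebra ℂ K]
    (D : Derivation ℂ K K) (A B : Matrix ι ι K) :
    (A * B).map D = A.map D * B + A * B.map D := by
  ext i j
  simp only [Matrix.map_apply, Matrix.mul_apply, Matrix.add_apply, map_sum, Derivation.leibniz,
    smul_eq_mul, ← Finset.sum_add_distrib]
  exact Finset.sum_congr rfl fun x _ => by ring

theorem aux_palin {n : ℕ} {K : Type} [Field K] {J X : Matrix (Fin (2 * n)) (Fin (2 * n)) K}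
    (hJ2 : J * J = -1) (hX : Xᵀ * J * X = J) :
    ∃ u : K, u * u = 1 ∧ ∀ i ≤ 2 * n, X.charpoly.coeff i = u * X.charpoly.coeff (2 * n - i) := by
  have hinv : (-J * Xᵀ * J) * X = 1 := by
    rw [Matrix.mul_assoc, Matrix.mul_assoc, ← Matrix.mul_assoc Xᵀ, hX, Matrix.neg_mul, hJ2, neg_neg]
  have hXi : X⁻¹ = -J * Xᵀ * J := Matrix.inv_eq_left_inv hinv
  have hu : IsUnit X := IsUnit.of_mul_eq_one _ (mul_eq_one_comm.1 hinv)
  have hJd : J.det * J.det = 1 := by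
    rw [← Matrix.det_mul, hJ2, Matrix.det_neg]
    simp
  have hJ0 : J.det ≠ 0 := fun h => by simp [h] at hJd
  have hd : X.det * X.det = 1 := by
    have := congrArg Matrix.det hX
    rw [Matrix.det_mul, Matrix.det_mul, Matrix.det_transpose] at this
    apply mul_right_cancel₀ hJ0
    linear_combination this
  have h1 := Matrix.charpoly_inv X hu
  have h2 : (X⁻¹).charpoly = X.charpoly := by
    rw [hXi, Matrix.charpoly_mul_comm, ← Matrix.mul_assoc, Matrix.mul_neg, hJ2, neg_neg,
      Matrix.one_mul, Matrix.charpoly_transpose]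
  rw [h2, ← Matrix.reverse_charpoly] at h1
  refine ⟨Ring.inverse X.det, ?_, ?_⟩
  · rw [Ring.inverse_eq_inv']
    rw [← mul_inv, hd, inv_one]
  · intro i hi
    conv_lhs => rw [h1]
    rw [Fintype.card_fin, pow_mul, neg_one_sq, one_pow, one_mul, Polynomial.coeff_C_mul,
      Polynomial.coeff_reverse, Matrix.charpoly_natDegree_eq_dim, Fintype.card_fin,
      Polynomial.revAt_le hi]

/-- the symplectic Lie algebra -/
def auxSp {n : ℕ} {K : Type} [Field K] (J : Matrix (Fin (2 * n)) (Fin (2 * n)) K) :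
    Submodule K (Matrix (Fin (2 * n)) (Fin (2 * n)) K) where
  carrier := {M | Mᵀ * J + J * M = 0}
  add_mem' := by
    intro a b ha hb
    simp only [Set.mem_ofPred_eq] at *
    rw [Matrix.transpose_add, Matrix.add_mul, Matrix.mul_add, add_add_add_comm, ha, hb, add_zero]
  zero_mem' := by simp
  smul_mem' := by
    intro c a ha
    simp only [Set.mem_ofPred_eq] at *
    rw [Matrix.transpose_smul, Matrix.smul_mul, Matrix.mul_smul, ← smul_add, ha, smul_zero]

theorem aux_mem_sp {n : ℕ} {K : Type} [Field K] {J M : Matrix (Fin (2 * n)) (Fin (2 * n)) K} :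
    M ∈ auxSp J ↔ Mᵀ * J + J * M = 0 := Iff.rfl

theorem aux_finrank_sp {n : ℕ} {K : Type} [Field K] [CharZero K]
    {J : Matrix (Fin (2 * n)) (Fin (2 * n)) K}
    (hJ2 : J * J = -1) (hJt : Jᵀ = -J) : Module.finrank K (auxSp J) ≤ 2 * n ^ 2 + n := by
  let f : auxSp J →ₗ[K] (Sym2 (Fin (2 * n)) → K) :=
    { toFun := fun M s => Sym2.lift ⟨fun i j => (J * M.1) i j + (J * M.1) j i,
        fun i j => add_comm _ _⟩ s
      map_add' := by
        intro a b
        ext s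
        induction s with
        | _ i j => simp [Matrix.mul_add]; ring
      map_smul' := by
        intro c a
        ext s
        induction s with
        | _ i j => simp; ring }
  have hf : Function.Injective f := by
    rw [← LinearMap.ker_eq_bot, LinearMap.ker_eq_bot']
    intro M hM
    have hs : (J * M.1)ᵀ = J * M.1 := by
      rw [Matrix.transpose_mul, hJt, Matrix.mul_neg]
      exact neg_eq_of_add_eq_zero_right (aux_mem_sp.1 M.2)
    have h0 : J * M.1 = 0 := by
      ext i j
      have h1 := congrFun hM s(i, j)
      have h2 : (J * M.1) i j + (J * M.1) j i = 0 := h1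
      have h3 : (J * M.1) j i = (J * M.1) i j := congrFun (congrFun hs i) j
      rw [h3, ← two_mul] at h2
      simpa using h2
    have h1 : J * (J * M.1) = 0 := by rw [h0, Matrix.mul_zero]
    rw [← Matrix.mul_assoc, hJ2, Matrix.neg_mul, Matrix.one_mul, neg_eq_zero] at h1
    exact Subtype.ext h1
  have := LinearMap.finrank_le_finrank_of_injective hf
  rw [Module.finrank_fintype_fun_eq_card, Sym2.card, Fintype.card_fin] at this
  refine this.trans (le_of_eq ?_)
  rw [Nat.choose_two_right, Nat.add_sub_cancel]
  have : (2 * n + 1) * (2 * n) = 2 * (2 * n ^ 2 + n) := by ring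
  rw [this]; simp

theorem aux_upper {n : ℕ} {K : Type} [Field K] [Algebra ℂ K]
    {J X Y : Matrix (Fin (2 * n)) (Fin (2 * n)) K}
    (hJ2 : J * J = -1) (hJt : Jᵀ = -J) (hJD : ∀ D : Derivation ℂ K K, J.map D = 0)
    (hX : Xᵀ * J * X = J) (hY : Yᵀ * J * Y = J) (hXY : X * Y = Y * X)
    (hgen : ∀ D : Derivation ℂ K K, X.map D = 0 → Y.map D = 0 → D = 0) :
    Module.finrank K (Derivation ℂ K K) ≤ 2 * n ^ 2 + 2 * n := by
  have : CharZero K := charZero_of_injective_algebraMap (FaithfulSMul.algebraMap_injective ℂ K)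
  -- general facts
  have hleft : ∀ {Z : Matrix (Fin (2 * n)) (Fin (2 * n)) K}, Zᵀ * J * Z = J →
      Z * (-J * Zᵀ * J) = 1 := by
    intro Z hZ
    apply mul_eq_one_comm.1
    rw [Matrix.mul_assoc, Matrix.mul_assoc, ← Matrix.mul_assoc Zᵀ, hZ, Matrix.neg_mul, hJ2, neg_neg]
  have hlog : ∀ {Z : Matrix (Fin (2 * n)) (Fin (2 * n)) K}, Zᵀ * J * Z = J →
      ∀ D : Derivation ℂ K K, Z.map D * (-J * Zᵀ * J) ∈ auxSp J := by
    intro Z hZ D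
    have h1 := congrArg (fun M => M.map D) hZ
    simp only [aux_map_mul, hJD, Matrix.mul_zero, add_zero] at h1
    have ht : Zᵀ.map D = (Z.map D)ᵀ := rfl
    rw [ht] at h1
    set W := -J * Zᵀ * J with hW
    have hZW : Z * W = 1 := hleft hZ
    have hWZ : Wᵀ * Zᵀ = 1 := by rw [← Matrix.transpose_mul, hZW, Matrix.transpose_one]
    rw [aux_mem_sp, Matrix.transpose_mul]
    have h2 : Wᵀ * ((Z.map D)ᵀ * J * Z + Zᵀ * J * Z.map D) * W = 0 := by
      rw [h1, Matrix.mul_zero, Matrix.zero_mul]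
    rw [Matrix.mul_add, Matrix.add_mul] at h2
    have e1 : Wᵀ * ((Z.map D)ᵀ * J * Z) * W = Wᵀ * (Z.map D)ᵀ * J := by
      simp only [Matrix.mul_assoc, hZW, Matrix.mul_one]
    have e2 : Wᵀ * (Zᵀ * J * Z.map D) * W = J * (Z.map D * W) := by
      simp only [← Matrix.mul_assoc, hWZ, Matrix.one_mul]
    rw [e1, e2] at h2
    exact h2
  let T : auxSp J →ₗ[K] Matrix (Fin (2 * n)) (Fin (2 * n)) K :=
    { toFun := fun M => M.1 * X - X * M.1
      map_add' := by
        intro a b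
        simp only [Submodule.coe_add, Matrix.add_mul, Matrix.mul_add]; abel
      map_smul' := by
        intro c a
        simp [smul_sub] }
  have hTap : ∀ M, T M = M.1 * X - X * M.1 := fun _ => rfl
  let ev : Matrix (Fin (2 * n)) (Fin (2 * n)) K → Derivation ℂ K K →ₗ[K]
      Matrix (Fin (2 * n)) (Fin (2 * n)) K := fun Z =>
    { toFun := fun D => Z.map D
      map_add' := by intro a b; ext; simp
      map_smul' := by intro a b; ext; simp }
  have hev : ∀ Z D, ev Z D = Z.map D := fun _ _ => rfl
  have hfin : Module.Finite K (Derivation ℂ K K) := by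
    apply Module.Finite.of_injective ((ev X).prod (ev Y))
    rw [← LinearMap.ker_eq_bot, LinearMap.ker_eq_bot']
    intro D hD
    have h1 := Prod.ext_iff.1 hD
    exact hgen D h1.1 h1.2
  -- step 1
  let f1 : Derivation ℂ K K →ₗ[K] (Fin n → K) :=
    { toFun := fun D i => D (X.charpoly.coeff (i + 1))
      map_add' := by intro a b; ext; simp
      map_smul' := by intro a b; ext; simp }
  have hf1 : ∀ D ∈ LinearMap.ker f1, X.map D ∈ LinearMap.range T := by
    intro D hD
    obtain ⟨u, hu, hpal⟩ := aux_palin hJ2 hX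
    have hDu : D u = 0 := by
      rcases mul_self_eq_one_iff.1 hu with rfl | rfl <;> simp
    have hlow : ∀ i ≤ n, D (X.charpoly.coeff i) = 0 := by
      intro i hi
      rcases Nat.eq_zero_or_pos i with rfl | hi0
      · rw [hpal 0 (Nat.zero_le _), Nat.sub_zero]
        have : X.charpoly.coeff (2 * n) = 1 := by
          have := X.charpoly_monic.coeff_natDegree
          rwa [Matrix.charpoly_natDegree_eq_dim, Fintype.card_fin] at this
        rw [this, mul_one, hDu]
      · have := congrFun (LinearMap.mem_ker.1 hD) ⟨i - 1, by omega⟩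
        have h2 : D (X.charpoly.coeff (i - 1 + 1)) = 0 := this
        rwa [Nat.sub_add_cancel hi0] at h2
    have hall : ∀ i, D (X.charpoly.coeff i) = 0 := by
      intro i
      rcases le_or_gt i n with h | h
      · exact hlow i h
      rcases le_or_gt i (2 * n) with h' | h'
      · rw [hpal i h', Derivation.leibniz, hDu, hlow _ (by omega)]; simp
      · rw [Polynomial.coeff_eq_zero_of_natDegree_lt (by
          rw [Matrix.charpoly_natDegree_eq_dim, Fintype.card_fin]; exact h'), map_zero]
    obtain ⟨M, hM⟩ := aux_conj (D.restrictScalars ℤ) X hall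
    have hM : X.map D = M * X - X * M := hM
    -- symmetrize
    set W := -J * Xᵀ * J with hW
    have hXW : X * W = 1 := hleft hX
    have hWX : W * X = 1 := mul_eq_one_comm.1 hXW
    have hA := hlog hX D
    rw [← hW, hM, aux_mem_sp] at hA
    have hMt : (M * X - X * M) * W = M - X * M * W := by
      rw [Matrix.sub_mul, Matrix.mul_assoc, hXW, Matrix.mul_one]
    rw [hMt] at hA
    let S := J * Mᵀ * J
    have hXT : Xᵀ = - (J * W * J) := by
      rw [hW]
      have : J * (-J * Xᵀ * J) * J = -((J * J) * Xᵀ * (J * J)) := by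
        simp only [Matrix.mul_assoc, Matrix.neg_mul, Matrix.mul_neg]
      rw [this, hJ2]; simp
    have hWT : Wᵀ = - (J * X * J) := by
      rw [hW]
      simp only [Matrix.transpose_mul, Matrix.transpose_neg, hJt, Matrix.transpose_transpose]
      simp [Matrix.mul_assoc]
    have hS : M - X * M * W = S - X * S * W := by
      have h3 : J * ((M - X * M * W)ᵀ * J + J * (M - X * M * W)) = 0 := by
        rw [hA, Matrix.mul_zero]
      rw [Matrix.mul_add, ← Matrix.mul_assoc J J, hJ2, Matrix.neg_mul, Matrix.one_mul,
        add_neg_eq_zero] at h3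
      rw [← h3]
      simp only [S, Matrix.transpose_sub, Matrix.transpose_mul, hXT, hWT, Matrix.sub_mul,
        Matrix.mul_sub]
      have hc : ∀ P : Matrix (Fin (2 * n)) (Fin (2 * n)) K, J * (J * P) = -P := by
        intro P; rw [← Matrix.mul_assoc, hJ2, Matrix.neg_mul, Matrix.one_mul]
      clear_value W
      simp only [Matrix.mul_assoc, Matrix.neg_mul, Matrix.mul_neg, neg_neg, hc, hJ2, Matrix.mul_one]
    have hSmem : (2⁻¹ : K) • (M + S) ∈ auxSp J := by
      apply Submodule.smul_mem
      rw [aux_mem_sp]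
      have : Sᵀ = J * M * J := by
        simp only [S, Matrix.transpose_mul, hJt, Matrix.transpose_transpose]
        simp [Matrix.mul_assoc]
      rw [Matrix.transpose_add, this, Matrix.add_mul, Matrix.mul_add]
      have e1 : J * M * J * J = - (J * M) := by rw [Matrix.mul_assoc, hJ2]; simp
      have e2 : J * S = - (Mᵀ * J) := by
        simp only [S]; rw [← Matrix.mul_assoc, ← Matrix.mul_assoc, hJ2]; simp
      rw [e1, e2]; abel
    refine ⟨⟨_, hSmem⟩, ?_⟩
    rw [hTap]
    simp only
    have h5 : M * X - X * M = S * X - X * S := by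
      have := congrArg (fun Z => Z * X) hS
      simpa only [Matrix.sub_mul, Matrix.mul_assoc, hWX, Matrix.mul_one] using this
    rw [hM, Matrix.smul_mul, Matrix.mul_smul, ← smul_sub, Matrix.add_mul, Matrix.mul_add]
    have h6 : M * X + S * X - (X * M + X * S) = (2 : K) • (M * X - X * M) := by
      rw [two_smul]; nth_rewrite 2 [h5]; abel
    rw [h6, smul_smul]; simp
  -- step 2
  let f2 : LinearMap.ker f1 →ₗ[K] Matrix (Fin (2 * n)) (Fin (2 * n)) K := (ev X).domRestrict _
  have hf2 : LinearMap.range f2 ≤ LinearMap.range T := by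
    rintro _ ⟨D, rfl⟩
    exact hf1 D.1 D.2
  -- step 3
  let f3 : LinearMap.ker f2 →ₗ[K] LinearMap.ker T :=
    { toFun := fun D => ⟨⟨Y.map D.1.1 * (-J * Yᵀ * J), hlog hY D.1.1⟩, by
        have h0 : X.map D.1.1 = 0 := D.2
        rw [LinearMap.mem_ker, hTap]
        simp only
        have h1 := congrArg (fun M => M.map D.1.1) hXY
        simp only [aux_map_mul, h0, Matrix.zero_mul, Matrix.mul_zero, zero_add, add_zero] at h1
        set W := -J * Yᵀ * J
        have hYW : Y * W = 1 := hleft hY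
        have hWY : W * Y = 1 := mul_eq_one_comm.1 hYW
        have h2 : W * X = X * W := by
          calc W * X = W * X * (Y * W) := by rw [hYW, Matrix.mul_one]
            _ = W * (X * Y) * W := by simp only [Matrix.mul_assoc]
            _ = W * Y * X * W := by rw [hXY]; simp only [Matrix.mul_assoc]
            _ = X * W := by rw [hWY, Matrix.one_mul]
        clear_value W
        rw [Matrix.mul_assoc, h2, ← Matrix.mul_assoc, ← h1, ← Matrix.mul_assoc, sub_self]⟩
      map_add' := by
        intro a b
        apply Subtype.ext; apply Subtype.ext
        change ev Y (a.1.1 + b.1.1) * _ = ev Y a.1.1 * _ + ev Y b.1.1 * _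
        rw [map_add, Matrix.add_mul]
      map_smul' := by
        intro c a
        apply Subtype.ext; apply Subtype.ext
        change ev Y (c • a.1.1) * _ = c • (ev Y a.1.1 * _)
        rw [map_smul, Matrix.smul_mul] }
  have hf3 : Function.Injective f3 := by
    intro D E hD
    have h1 : Y.map D.1.1 * (-J * Yᵀ * J) = Y.map E.1.1 * (-J * Yᵀ * J) :=
      congrArg (fun z : LinearMap.ker T => z.1.1) hD
    have h2 : Y.map D.1.1 = Y.map E.1.1 := by
      have h3 := congrArg (fun Z => Z * Y) h1
      rwa [Matrix.mul_assoc, Matrix.mul_assoc (Y.map _), mul_eq_one_comm.1 (hleft hY),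
        Matrix.mul_one, Matrix.mul_one] at h3
    have h4 : X.map D.1.1 = 0 := D.2
    have h5 : X.map E.1.1 = 0 := E.2
    apply Subtype.ext; apply Subtype.ext
    refine sub_eq_zero.1 (hgen _ ?_ ?_)
    · change ev X (D.1.1 - E.1.1) = 0
      rw [map_sub, hev, hev, h4, h5, sub_zero]
    · change ev Y (D.1.1 - E.1.1) = 0
      rw [map_sub, hev, hev, h2, sub_self]
  have k1 := LinearMap.finrank_range_add_finrank_ker f1
  have k2 := LinearMap.finrank_range_add_finrank_ker f2
  have k3 := LinearMap.finrank_le_finrank_of_injective hf3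
  have k4 := LinearMap.finrank_range_add_finrank_ker T
  have k5 := Submodule.finrank_mono hf2
  have k6 := aux_finrank_sp hJ2 hJt
  have k7 : Module.finrank K (LinearMap.range f1) ≤ n := by
    have := Submodule.finrank_le (LinearMap.range f1)
    rwa [Module.finrank_fintype_fun_eq_card, Fintype.card_fin] at this
  omega

end SpPart

section UpperPart

theorem aux_J_sq (n : ℕ) (R : Type) [CommRing R] : sympJ n R * sympJ n R = -1 := by
  simp only [sympJ, Matrix.reindex_apply]
  rw [Matrix.submatrix_mul_equiv, Matrix.fromBlocks_multiply]
  simp only [zero_mul, mul_zero, mul_one, one_mul, add_zero, zero_add]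
  rw [← neg_zero, ← Matrix.fromBlocks_neg, Matrix.fromBlocks_one]
  ext i j
  simp [Matrix.one_apply]

theorem aux_J_tr (n : ℕ) (R : Type) [CommRing R] : (sympJ n R)ᵀ = - sympJ n R := by
  simp only [sympJ, Matrix.reindex_apply, Matrix.transpose_submatrix, Matrix.fromBlocks_transpose,
    Matrix.transpose_zero, Matrix.transpose_one, Matrix.transpose_neg]
  have h : (Matrix.fromBlocks 0 (-1) 1 0 : Matrix (Fin n ⊕ Fin n) (Fin n ⊕ Fin n) R) =
      - Matrix.fromBlocks 0 1 (-1) 0 := by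
    rw [Matrix.fromBlocks_neg]; simp
  rw [h]
  rfl

theorem aux_J_map (n : ℕ) {R S : Type} [CommRing R] [CommRing S] (f : R →+* S) :
    (sympJ n R).map f = sympJ n S := by
  simp only [sympJ, Matrix.reindex_apply, ← Matrix.submatrix_map, Matrix.fromBlocks_map]
  simp [Matrix.map_neg]

/-- the defining ideal -/
noncomputable def auxI (n : ℕ) : Ideal (SpRing n) :=
  Ideal.span
          ({p | ∃ i j, p = (genX n * genY n - genY n * genX n) i j} ∪
           {p | ∃ i j, p =
              ((genX n)ᵀ * sympJ n (SpRing n) * genX n - sympJ n (SpRing n)) i j} ∪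
           {p | ∃ i j, p =
              ((genY n)ᵀ * sympJ n (SpRing n) * genY n - sympJ n (SpRing n)) i j})

theorem aux_ideal (n : ℕ) {K : Type} [CommRing K] (f : SpRing n →+* K) :
    auxI n ≤ RingHom.ker f ↔
      ((genX n).map f * (genY n).map f = (genY n).map f * (genX n).map f ∧
       ((genX n).map f)ᵀ * sympJ n K * (genX n).map f = sympJ n K ∧
       ((genY n).map f)ᵀ * sympJ n K * (genY n).map f = sympJ n K) := by
  have e1 : ((genX n * genY n - genY n * genX n)).map f =
      (genX n).map f * (genY n).map f - (genY n).map f * (genX n).map f := by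
    rw [Matrix.map_sub _ (map_sub f), Matrix.map_mul, Matrix.map_mul]
  have e2 : ∀ Z : Matrix (Fin (2 * n)) (Fin (2 * n)) (SpRing n),
      (Zᵀ * sympJ n (SpRing n) * Z - sympJ n (SpRing n)).map f =
      (Z.map f)ᵀ * sympJ n K * Z.map f - sympJ n K := by
    intro Z
    rw [Matrix.map_sub _ (map_sub f), Matrix.map_mul, Matrix.map_mul, aux_J_map]
    rfl
  rw [← sub_eq_zero, ← e1, ← sub_eq_zero (a := _ * sympJ n K * _), ← e2,
    ← sub_eq_zero (a := _ * sympJ n K * _), ← e2]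
  unfold auxI
  rw [Ideal.span_le]
  constructor
  · intro h
    refine ⟨?_, ?_, ?_⟩
    · ext i j; exact h (Or.inl (Or.inl ⟨i, j, rfl⟩))
    · ext i j; exact h (Or.inl (Or.inr ⟨i, j, rfl⟩))
    · ext i j; exact h (Or.inr ⟨i, j, rfl⟩)
  · rintro ⟨h1, h2, h3⟩ p ((⟨i, j, rfl⟩ | ⟨i, j, rfl⟩) | ⟨i, j, rfl⟩)
    · exact congrFun (congrFun h1 i) j
    · exact congrFun (congrFun h2 i) j
    · exact congrFun (congrFun h3 i) j

theorem aux_upper_krull (n : ℕ) (hA : Nontrivial (SpRing n ⧸ auxI n)) :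
    ringKrullDim (SpRing n ⧸ auxI n) ≤ ((2 * n ^ 2 + 2 * n : ℕ) : WithBot (WithTop ℕ)) := by
  obtain ⟨Q, hQ, hdim⟩ := aux_krull_exists (SpRing n ⧸ auxI n)
  let B := (SpRing n ⧸ auxI n) ⧸ Q
  let K := FractionRing B
  rw [hdim, aux_krull_domain B K]
  let f : SpRing n →ₐ[ℂ] K :=
    ((IsScalarTower.toAlgHom ℂ B K).comp (Ideal.Quotient.mkₐ ℂ Q)).comp
      (Ideal.Quotient.mkₐ ℂ (auxI n))
  have hf : auxI n ≤ RingHom.ker (f : SpRing n →+* K) := by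
    intro p hp
    have h0 : Ideal.Quotient.mkₐ ℂ (auxI n) p = 0 := Ideal.Quotient.eq_zero_iff_mem.2 hp
    rw [RingHom.mem_ker]
    change ((IsScalarTower.toAlgHom ℂ B K).comp (Ideal.Quotient.mkₐ ℂ Q))
      (Ideal.Quotient.mkₐ ℂ (auxI n) p) = 0
    rw [h0, map_zero]
  obtain ⟨h1, h2, h3⟩ := (aux_ideal n _).1 hf
  have key : Module.finrank K (Derivation ℂ K K) ≤ 2 * n ^ 2 + 2 * n := by
    refine aux_upper (aux_J_sq n K) (aux_J_tr n K) ?_ h2 h3 h1 ?_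
    · intro D
      rw [← aux_J_map n (algebraMap ℂ K)]
      ext i j
      simp
    · intro D hDX hDY
      have hp : ∀ p, D (f p) = 0 := by
        intro p
        induction p using MvPolynomial.induction_on with
        | C a =>
          have : f (C a) = algebraMap ℂ K a := f.commutes a
          rw [this, Derivation.map_algebraMap]
        | add p q hp hq => rw [map_add, map_add, hp, hq, add_zero]
        | mul_X p i hp =>
          rw [map_mul, Derivation.leibniz, hp, smul_zero, add_zero]
          have : D (f (X i)) = 0 := by
            rcases i with ⟨i, j⟩ | ⟨i, j⟩
            · exact congrFun (congrFun hDX i) j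
            · exact congrFun (congrFun hDY i) j
          rw [this, smul_zero]
      have hb : ∀ b : B, D (algebraMap B K b) = 0 := by
        intro b
        obtain ⟨a, rfl⟩ := Ideal.Quotient.mk_surjective b
        obtain ⟨p, rfl⟩ := Ideal.Quotient.mk_surjective a
        exact hp p
      ext z
      obtain ⟨a, b, hbn, rfl⟩ := IsFractionRing.div_surjective (A := B) z
      rw [Derivation.leibniz_div, hb, hb]
      simp
  exact WithBot.coe_le_coe.2 (WithTop.coe_le_coe.2 key)

end UpperPart

section LowerPart

theorem aux_lower_abs {n : ℕ} {K : Type} [Field K] [Algebra ℂ K]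
    {MX MY : Matrix (Fin (2 * n)) (Fin (2 * n)) K}
    (h1 : MX * MY = MY * MX) (h2 : MXᵀ * sympJ n K * MX = sympJ n K)
    (h3 : MYᵀ * sympJ n K * MY = sympJ n K)
    (hgen : ∀ F : IntermediateField ℂ K, (∀ i j, MX i j ∈ F) → (∀ i j, MY i j ∈ F) →
      ∀ z, z ∈ F) :
    ((Module.finrank K (Derivation ℂ K K) : ℕ) : WithBot ℕ∞) ≤ ringKrullDim (SpRing n ⧸ auxI n) := by
  let g : ((Fin (2 * n) × Fin (2 * n)) ⊕ (Fin (2 * n) × Fin (2 * n))) → K :=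
    Sum.elim (fun p => MX p.1 p.2) (fun p => MY p.1 p.2)
  let f : SpRing n →ₐ[ℂ] K := aeval g
  have e1 : (genX n).map (f : SpRing n →+* K) = MX := by
    ext i j; simp [genX, f, g]
  have e2 : (genY n).map (f : SpRing n →+* K) = MY := by
    ext i j; simp [genY, f, g]
  have hf : auxI n ≤ RingHom.ker (f : SpRing n →+* K) := by
    rw [aux_ideal, e1, e2]
    exact ⟨h1, h2, h3⟩
  let B := f.range
  have hB : B = Algebra.adjoin ℂ (Set.range g) := (Algebra.adjoin_range_eq_range_aeval ℂ g).symm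
  have hfr : IsFractionRing B K := by
    apply IsFractionRing.of_field
    intro z
    have hz := hgen (IntermediateField.adjoin ℂ (Set.range g))
      (fun i j => IntermediateField.subset_adjoin _ _ ⟨Sum.inl (i, j), rfl⟩)
      (fun i j => IntermediateField.subset_adjoin _ _ ⟨Sum.inr (i, j), rfl⟩) z
    obtain ⟨r, hr, s, hs, rfl⟩ := IntermediateField.mem_adjoin_iff_div.1 hz
    rw [← hB] at hr hs
    exact ⟨⟨r, hr⟩, ⟨s, hs⟩, rfl⟩
  have hft : Algebra.FiniteType ℂ B :=
    Algebra.FiniteType.of_surjective f.rangeRestrict f.rangeRestrict_surjective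
  rw [← aux_krull_domain B K]
  let φ : (SpRing n ⧸ auxI n) →+* B := Ideal.Quotient.lift (auxI n)
    (f.rangeRestrict : SpRing n →+* B) (by
      intro a ha
      exact Subtype.ext (hf ha))
  exact ringKrullDim_le_of_surjective φ
    (Ideal.Quotient.lift_surjective_of_surjective _ _ f.rangeRestrict_surjective)

theorem aux_solve {ι κ : Type} [Fintype ι] [DecidableEq ι] {K : Type} [Field K] [Algebra ℂ K]
    (F : IntermediateField ℂ K) {P : Matrix ι ι K} {S Q : Matrix κ ι K}
    (hP : ∀ i j, P i j ∈ F) (hQ : ∀ i j, Q i j ∈ F) (hd : P.det ≠ 0) (h : S * P = Q) :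
    ∀ i j, S i j ∈ F := by
  let P' : Matrix ι ι F := fun i j => ⟨P i j, hP i j⟩
  let Q' : Matrix κ ι F := fun i j => ⟨Q i j, hQ i j⟩
  have eP : P'.map (algebraMap F K) = P := rfl
  have eQ : Q'.map (algebraMap F K) = Q := rfl
  have hd' : IsUnit P'.det := by
    rw [isUnit_iff_ne_zero]
    intro h0
    apply hd
    rw [← eP]
    have := RingHom.map_det (algebraMap F K) P'
    rw [h0, map_zero] at this
    exact this.symm
  have e3 : (Q' * P'⁻¹).map (algebraMap F K) * P = Q := by
    rw [← eP, ← Matrix.map_mul, Matrix.mul_assoc, Matrix.nonsing_inv_mul _ hd', Matrix.mul_one, eQ]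
  have e4 : S = (Q' * P'⁻¹).map (algebraMap F K) := by
    have hu : IsUnit P.det := isUnit_iff_ne_zero.2 hd
    rw [← Matrix.mul_nonsing_inv_cancel_right P S hu, h, ← e3,
      Matrix.mul_nonsing_inv_cancel_right P _ hu]
  intro i j
  rw [e4]
  exact ((Q' * P'⁻¹) i j).2

theorem aux_comm_inv {R : Type} [Ring R] {a n b : R} (h1 : a * n = 1) (h2 : n * a = 1)
    (h : a * b = b * a) : n * b = b * n := by
  calc n * b = n * b * (a * n) := by rw [h1, mul_one]
    _ = n * (b * a) * n := by simp only [mul_assoc]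
    _ = (n * a) * b * n := by rw [← h]; simp only [mul_assoc]
    _ = b * n := by rw [h2, one_mul]

/-- Cayley transform -/
noncomputable def auxCay {ι : Type} [Fintype ι] [DecidableEq ι] {K : Type} [Field K]
    (S : Matrix ι ι K) : Matrix ι ι K := (1 + S) * (1 - S)⁻¹

theorem aux_cay_symp {n : ℕ} {K : Type} [Field K]
    {J S : Matrix (Fin (2 * n)) (Fin (2 * n)) K} (hS : Sᵀ * J + J * S = 0)
    (hd : (1 - S).det ≠ 0) : (auxCay S)ᵀ * J * auxCay S = J := by
  have hu := isUnit_iff_ne_zero.2 hd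
  unfold auxCay
  set N := (1 - S)⁻¹
  have hN : (1 - S) * N = 1 := Matrix.mul_nonsing_inv _ hu
  have hNt : Nᵀ * (1 - S)ᵀ = 1 := by rw [← Matrix.transpose_mul, hN, Matrix.transpose_one]
  have hS' : Sᵀ * J = - (J * S) := eq_neg_of_add_eq_zero_left hS
  have e1 : (1 - S)ᵀ * J = J * (1 + S) := by
    rw [Matrix.transpose_sub, Matrix.sub_mul, hS', Matrix.mul_add]; simp
  have e2 : (1 + S)ᵀ * J = J * (1 - S) := by
    rw [Matrix.transpose_add, Matrix.add_mul, hS', Matrix.mul_sub]; simp [sub_eq_add_neg]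
  have e3 : (1 - S) * (1 + S) = (1 + S) * (1 - S) := by noncomm_ring
  rw [Matrix.transpose_mul]
  calc Nᵀ * (1 + S)ᵀ * J * ((1 + S) * N) = Nᵀ * ((1 + S)ᵀ * J) * (1 + S) * N := by
        simp only [Matrix.mul_assoc]
    _ = Nᵀ * J * ((1 - S) * (1 + S)) * N := by rw [e2]; simp only [Matrix.mul_assoc]
    _ = Nᵀ * (J * (1 + S)) * ((1 - S) * N) := by rw [e3]; simp only [Matrix.mul_assoc]
    _ = (Nᵀ * (1 - S)ᵀ) * J := by rw [hN, ← e1, Matrix.mul_one]; simp only [Matrix.mul_assoc]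
    _ = J := by rw [hNt, Matrix.one_mul]

theorem aux_cay_comm {ι : Type} [Fintype ι] [DecidableEq ι] {K : Type} [Field K]
    {S Z : Matrix ι ι K} (h : S * Z = Z * S) (hS : (1 - S).det ≠ 0) (hZ : (1 - Z).det ≠ 0) :
    auxCay S * auxCay Z = auxCay Z * auxCay S := by
  have hu := isUnit_iff_ne_zero.2 hS
  have hv := isUnit_iff_ne_zero.2 hZ
  have key : ∀ {A T : Matrix ι ι K}, (1 - A).det ≠ 0 → A * T = T * A →
      auxCay A * T = T * auxCay A := by
    intro A T hA hAT
    have hu := isUnit_iff_ne_zero.2 hA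
    have h1 : (1 - A)⁻¹ * T = T * (1 - A)⁻¹ :=
      aux_comm_inv (Matrix.mul_nonsing_inv _ hu) (Matrix.nonsing_inv_mul _ hu) (by
        rw [Matrix.sub_mul, Matrix.mul_sub, hAT, Matrix.mul_one, Matrix.one_mul])
    unfold auxCay
    rw [Matrix.mul_assoc, h1, ← Matrix.mul_assoc, Matrix.add_mul, hAT, Matrix.one_mul,
      ← Matrix.mul_assoc T, Matrix.mul_add, Matrix.mul_one]
  exact key hS (key hZ h.symm).symm

theorem aux_cay_mem {ι : Type} [Fintype ι] [DecidableEq ι] {K : Type} [Field K] [Algebra ℂ K]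
    (F : IntermediateField ℂ K) {S : Matrix ι ι K} (hS : (1 - S).det ≠ 0)
    (h : ∀ i j, auxCay S i j ∈ F) : ∀ i j, S i j ∈ F := by
  have : CharZero K := charZero_of_injective_algebraMap (FaithfulSMul.algebraMap_injective ℂ K)
  have hu := isUnit_iff_ne_zero.2 hS
  have h1 : ∀ i j, (1 : Matrix ι ι K) i j ∈ F := by
    intro i j
    rw [Matrix.one_apply]
    split_ifs
    · exact F.one_mem
    · exact F.zero_mem
  have hN : (1 - S) * (1 - S)⁻¹ = 1 := Matrix.mul_nonsing_inv _ hu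
  have e1 : auxCay S + 1 = (2 : K) • (1 - S)⁻¹ := by
    conv_lhs => rw [← hN]
    unfold auxCay
    rw [← Matrix.add_mul, two_smul]
    have : 1 + S + (1 - S) = 1 + 1 := by abel
    rw [this, Matrix.add_mul, Matrix.one_mul]
  have e2 : auxCay S - 1 = S * (auxCay S + 1) := by
    rw [e1]
    conv_lhs => rw [← hN]
    unfold auxCay
    rw [← Matrix.sub_mul, two_smul, Matrix.mul_add]
    have : 1 + S - (1 - S) = S + S := by abel
    rw [this, Matrix.add_mul]
  refine aux_solve F (P := auxCay S + 1) (Q := auxCay S - 1)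
    (fun i j => F.add_mem (h i j) (h1 i j)) (fun i j => F.sub_mem (h i j) (h1 i j)) ?_ e2.symm
  rw [e1, Matrix.det_smul]
  apply mul_ne_zero (pow_ne_zero _ two_ne_zero)
  rw [Matrix.det_nonsing_inv, Ring.inverse_eq_inv']
  exact inv_ne_zero hS

end LowerPart

section GenericPart

/-- index set of the parameters -/
abbrev auxT (n : ℕ) : Type := Sym2 (Fin (2 * n)) ⊕ Fin n

/-- parameter ring -/
noncomputable abbrev auxR (n : ℕ) : Type := MvPolynomial (auxT n) ℂ

/-- the index equivalence -/
def auxE (n : ℕ) : Fin n ⊕ Fin n ≃ Fin (2 * n) := finSumFinEquiv.trans (finCongr (by ring))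

/-- generic symmetric matrix -/
noncomputable def auxSym (n : ℕ) : Matrix (Fin (2 * n)) (Fin (2 * n)) (auxR n) :=
  fun i j => X (Sum.inl s(i, j))

/-- generic element of the symplectic Lie algebra -/
noncomputable def auxS (n : ℕ) : Matrix (Fin (2 * n)) (Fin (2 * n)) (auxR n) :=
  sympJ n (auxR n) * auxSym n

/-- generic odd polynomial in `auxS` -/
noncomputable def auxZ (n : ℕ) : Matrix (Fin (2 * n)) (Fin (2 * n)) (auxR n) :=
  ∑ k : Fin n, (X (Sum.inr k) : auxR n) • auxS n ^ (2 * (k : ℕ) + 1)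

/-- the coefficient matrix -/
noncomputable def auxM (n : ℕ) : Matrix (Fin n) (Fin n) (auxR n) :=
  fun i k => (auxS n ^ (2 * (k : ℕ) + 1)) (auxE n (Sum.inl i)) (auxE n (Sum.inl i))

theorem aux_J_apply (n : ℕ) (R : Type) [CommRing R] (i j : Fin n ⊕ Fin n) :
    sympJ n R (auxE n i) (auxE n j) =
      (Matrix.fromBlocks 0 1 (-1) 0 : Matrix (Fin n ⊕ Fin n) (Fin n ⊕ Fin n) R) i j := by
  have h : sympJ n R = Matrix.reindex (auxE n) (auxE n) (Matrix.fromBlocks 0 1 (-1) 0) := rfl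
  rw [h, Matrix.reindex_apply, Matrix.submatrix_apply, Equiv.symm_apply_apply,
    Equiv.symm_apply_apply]

theorem aux_S_sp (n : ℕ) : (auxS n)ᵀ * sympJ n (auxR n) + sympJ n (auxR n) * auxS n = 0 := by
  have h : (auxSym n)ᵀ = auxSym n := by
    ext i j
    simp only [auxSym, Matrix.transpose_apply, Sym2.eq_swap]
  unfold auxS
  rw [Matrix.transpose_mul, h, aux_J_tr, ← Matrix.mul_assoc, aux_J_sq, Matrix.mul_assoc,
    Matrix.neg_mul, aux_J_sq]
  simp

theorem aux_pow_sp {ι R : Type} [Fintype ι] [DecidableEq ι] [CommRing R] {J S : Matrix ι ι R}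
    (h : Sᵀ * J + J * S = 0) (k : ℕ) :
    (S ^ (2 * k + 1))ᵀ * J + J * S ^ (2 * k + 1) = 0 := by
  have h' : Sᵀ * J = - (J * S) := eq_neg_of_add_eq_zero_left h
  induction k with
  | zero => simpa using h
  | succ k ih =>
    have ih' : (S ^ (2 * k + 1))ᵀ * J = - (J * S ^ (2 * k + 1)) := eq_neg_of_add_eq_zero_left ih
    have e : S ^ (2 * (k + 1) + 1) = S * (S ^ (2 * k + 1) * S) := by
      rw [← pow_succ, ← pow_succ']
      rfl
    rw [e, Matrix.transpose_mul, Matrix.transpose_mul]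
    have e2 : Sᵀ * (S ^ (2 * k + 1))ᵀ * Sᵀ * J = - (J * (S * (S ^ (2 * k + 1) * S))) := by
      rw [Matrix.mul_assoc, h', Matrix.mul_assoc, Matrix.mul_neg, ← Matrix.mul_assoc _ J, ih',
        Matrix.neg_mul, neg_neg, Matrix.mul_assoc, ← Matrix.mul_assoc _ J, h', Matrix.neg_mul,
        Matrix.mul_assoc]
    rw [e2, neg_add_cancel]

theorem aux_Z_sp (n : ℕ) : (auxZ n)ᵀ * sympJ n (auxR n) + sympJ n (auxR n) * auxZ n = 0 := by
  unfold auxZ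
  rw [Matrix.transpose_sum, Matrix.sum_mul, Matrix.mul_sum, ← Finset.sum_add_distrib]
  refine Finset.sum_eq_zero fun k _ => ?_
  rw [Matrix.transpose_smul, Matrix.smul_mul, Matrix.mul_smul, ← smul_add,
    aux_pow_sp (aux_S_sp n), smul_zero]

theorem aux_SZ_comm (n : ℕ) : auxS n * auxZ n = auxZ n * auxS n := by
  unfold auxZ
  rw [Matrix.mul_sum, Matrix.sum_mul]
  refine Finset.sum_congr rfl fun k _ => ?_
  rw [Matrix.mul_smul, Matrix.smul_mul, ← pow_succ, ← pow_succ']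

theorem aux_S_map_zero (n : ℕ) : (auxS n).map (aeval (0 : auxT n → ℂ) : auxR n →ₐ[ℂ] ℂ) = 0 := by
  unfold auxS
  rw [Matrix.map_mul]
  have : (auxSym n).map (aeval (0 : auxT n → ℂ) : auxR n →ₐ[ℂ] ℂ) = 0 := by
    ext i j; simp [auxSym]
  rw [this, Matrix.mul_zero]

theorem aux_det_ne {ι R : Type} [Fintype ι] [DecidableEq ι] [CommRing R] (f : R →+* ℂ)
    {A : Matrix ι ι R} (h : (A.map f).det ≠ 0) : A.det ≠ 0 := by
  intro h0
  apply h
  have := RingHom.map_det f A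
  rw [h0, map_zero] at this
  exact this.symm

theorem aux_det_S (n : ℕ) : (1 - auxS n).det ≠ 0 := by
  apply aux_det_ne (aeval (0 : auxT n → ℂ) : auxR n →ₐ[ℂ] ℂ).toRingHom
  have : (1 - auxS n).map (aeval (0 : auxT n → ℂ) : auxR n →ₐ[ℂ] ℂ).toRingHom = 1 := by
    rw [Matrix.map_sub _ (map_sub _)]
    have := aux_S_map_zero n
    rw [show (auxS n).map (aeval (0 : auxT n → ℂ) : auxR n →ₐ[ℂ] ℂ).toRingHom = 0 from this]
    rw [Matrix.map_one _ (map_zero _) (map_one _), sub_zero]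
  rw [this, Matrix.det_one]
  exact one_ne_zero

theorem aux_det_Z (n : ℕ) : (1 - auxZ n).det ≠ 0 := by
  apply aux_det_ne (aeval (0 : auxT n → ℂ) : auxR n →ₐ[ℂ] ℂ).toRingHom
  have : (1 - auxZ n).map (aeval (0 : auxT n → ℂ) : auxR n →ₐ[ℂ] ℂ).toRingHom = 1 := by
    rw [Matrix.map_sub _ (map_sub _)]
    have : (auxZ n).map (aeval (0 : auxT n → ℂ) : auxR n →ₐ[ℂ] ℂ).toRingHom = 0 := by
      ext i j
      simp [auxZ, Matrix.sum_apply]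
    rw [this, Matrix.map_one _ (map_zero _) (map_one _), sub_zero]
  rw [this, Matrix.det_one]
  exact one_ne_zero

theorem aux_det_M (n : ℕ) : (auxM n).det ≠ 0 := by
  let a : Fin n → ℂ := fun i => ((i : ℕ) + 1 : ℕ)
  let d : Fin (2 * n) → ℂ := fun i => Sum.elim a (-a) ((auxE n).symm i)
  let J := sympJ n ℂ
  let D : Matrix (Fin (2 * n)) (Fin (2 * n)) ℂ := Matrix.diagonal d
  have hDJ : D * J = - (J * D) := by
    ext i j
    rw [Matrix.neg_apply, Matrix.diagonal_mul, Matrix.mul_diagonal]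
    obtain ⟨i, rfl⟩ := (auxE n).surjective i
    obtain ⟨j, rfl⟩ := (auxE n).surjective j
    simp only [J, aux_J_apply, d, Equiv.symm_apply_apply]
    rcases i with i | i <;> rcases j with j | j <;> simp [Matrix.one_apply]
    · split_ifs with h
      · rw [h]
      · rfl
    · split_ifs with h
      · rw [h, neg_neg]
      · rw [neg_zero]
  have hsym : (-(J * D))ᵀ = -(J * D) := by
    rw [Matrix.transpose_neg, Matrix.transpose_mul, aux_J_tr, Matrix.diagonal_transpose,
      Matrix.mul_neg, neg_neg]
    exact hDJ
  let v : auxT n → ℂ := Sum.elim (fun s => Sym2.lift ⟨fun i j => (-(J * D)) i j, fun i j =>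
    (congrFun (congrFun hsym i) j).symm⟩ s) 0
  let f : auxR n →+* ℂ := (aeval v : auxR n →ₐ[ℂ] ℂ).toRingHom
  apply aux_det_ne f
  have hS : (auxS n).map f = D := by
    unfold auxS
    rw [Matrix.map_mul, aux_J_map]
    have : (auxSym n).map f = -(J * D) := by
      ext i j
      simp [auxSym, f, v]
    rw [this, Matrix.mul_neg, ← Matrix.mul_assoc, aux_J_sq]
    simp
  have hM : (auxM n).map f = Matrix.of fun i k => a i * Matrix.vandermonde (fun i => a i ^ 2) i k := by
    ext i k
    have h1 : ((auxS n) ^ (2 * (k : ℕ) + 1)).map f = D ^ (2 * (k : ℕ) + 1) := by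
      rw [← hS]
      exact map_pow f.mapMatrix (auxS n) _
    have h2 := congrFun (congrFun h1 (auxE n (Sum.inl i))) (auxE n (Sum.inl i))
    rw [Matrix.diagonal_pow, Matrix.diagonal_apply_eq] at h2
    refine h2.trans ?_
    simp only [Pi.pow_apply, d, Equiv.symm_apply_apply, Sum.elim_inl, Matrix.of_apply,
      Matrix.vandermonde_apply]
    rw [pow_succ', pow_mul]
  rw [hM, Matrix.det_mul_column]
  apply mul_ne_zero
  · exact Finset.prod_ne_zero_iff.2 fun i _ => Nat.cast_ne_zero.2 (Nat.succ_ne_zero _)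
  · rw [Matrix.det_vandermonde_ne_zero_iff]
    intro i j hij
    simp only [a] at hij
    have h3 : ((i : ℕ) + 1) ^ 2 = ((j : ℕ) + 1) ^ 2 := by exact_mod_cast hij
    have h4 := Nat.pow_left_injective (n := 2) (by norm_num) h3
    apply Fin.ext
    simpa using h4

theorem aux_lower_krull (n : ℕ) :
    ((2 * n ^ 2 + 2 * n : ℕ) : WithBot ℕ∞) ≤ ringKrullDim (SpRing n ⧸ auxI n) := by
  let K := FractionRing (auxR n)
  let i : auxR n →+* K := algebraMap (auxR n) K
  have hi : Function.Injective i := IsFractionRing.injective (auxR n) K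
  have hcard : Module.finrank K (Derivation ℂ K K) = 2 * n ^ 2 + 2 * n := by
    have : Algebra.IsAlgebraic (auxR n) K := IsFractionRing.comap_isAlgebraic_iff (K := K).2 inferInstance
    rw [aux_finrank_der (σ := auxT n), Fintype.card_sum, Sym2.card, Fintype.card_fin,
      Fintype.card_fin, Nat.choose_two_right, Nat.add_sub_cancel]
    have : (2 * n + 1) * (2 * n) = 2 * (2 * n ^ 2 + n) := by ring
    rw [this, Nat.mul_div_cancel_left _ two_pos]
    ring
  rw [← hcard]
  let S := (auxS n).map i
  let Z := (auxZ n).map i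
  have hsp : ∀ T : Matrix (Fin (2 * n)) (Fin (2 * n)) (auxR n),
      Tᵀ * sympJ n (auxR n) + sympJ n (auxR n) * T = 0 →
      (T.map i)ᵀ * sympJ n K + sympJ n K * T.map i = 0 := by
    intro T hT
    have ht : (T.map i)ᵀ = Tᵀ.map i := rfl
    rw [← aux_J_map n i, ht, ← Matrix.map_mul, ← Matrix.map_mul,
      ← Matrix.map_add _ (map_add i), hT]
    exact Matrix.map_zero _ (map_zero i)
  have hdet : ∀ T : Matrix (Fin (2 * n)) (Fin (2 * n)) (auxR n),
      (1 - T).det ≠ 0 → (1 - T.map i).det ≠ 0 := by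
    intro T hT h0
    apply hT
    apply hi
    rw [map_zero, ← h0, RingHom.map_det]
    congr 1
    rw [map_sub, map_one]
    rfl
  have hSd : (1 - S).det ≠ 0 := hdet _ (aux_det_S n)
  have hZd : (1 - Z).det ≠ 0 := hdet _ (aux_det_Z n)
  have hSZ : S * Z = Z * S := by
    simp only [S, Z]
    rw [← Matrix.map_mul, aux_SZ_comm, Matrix.map_mul]
  refine aux_lower_abs (aux_cay_comm hSZ hSd hZd) (aux_cay_symp (hsp _ (aux_S_sp n)) hSd)
    (aux_cay_symp (hsp _ (aux_Z_sp n)) hZd) ?_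
  intro F hFX hFY
  have hS := aux_cay_mem F hSd hFX
  have hZ := aux_cay_mem F hZd hFY
  have hmul : ∀ A B : Matrix (Fin (2 * n)) (Fin (2 * n)) K, (∀ i j, A i j ∈ F) →
      (∀ i j, B i j ∈ F) → ∀ i j, (A * B) i j ∈ F := by
    intro A B hA hB i j
    rw [Matrix.mul_apply]
    exact F.sum_mem fun k _ => F.mul_mem (hA _ _) (hB _ _)
  have hJ : ∀ i j, sympJ n K i j ∈ F := by
    intro i j
    rw [← aux_J_map n (algebraMap ℂ K)]
    exact F.algebraMap_mem _
  have hSym : ∀ p q, i (X (Sum.inl s(p, q))) ∈ F := by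
    intro p q
    have h1 := hmul _ _ hJ hS p q
    have h2 : sympJ n K * S = -(auxSym n).map i := by
      simp only [S, auxS]
      rw [Matrix.map_mul, aux_J_map, ← Matrix.mul_assoc, aux_J_sq]
      simp
    rw [h2] at h1
    exact neg_mem_iff.1 h1
  have hpow : ∀ m : ℕ, ∀ p q, (S ^ (m + 1)) p q ∈ F := by
    intro m
    induction m with
    | zero => simpa using hS
    | succ m ih =>
      rw [pow_succ]
      exact hmul _ _ ih hS
  have hSp : ∀ m, (auxS n ^ m).map i = S ^ m := fun m => map_pow i.mapMatrix (auxS n) m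
  have hs : ∀ k, i (X (Sum.inr k)) ∈ F := by
    intro k
    let P : Matrix (Fin n) (Fin n) K := ((auxM n).map i)ᵀ
    let v : Matrix Unit (Fin n) K := fun _ k => i (X (Sum.inr k))
    let Q : Matrix Unit (Fin n) K := fun _ p => Z (auxE n (Sum.inl p)) (auxE n (Sum.inl p))
    refine aux_solve F (P := P) (S := v) (Q := Q) ?_ ?_ ?_ ?_ () k
    · intro p q
      have := hpow (2 * (p : ℕ)) (auxE n (Sum.inl q)) (auxE n (Sum.inl q))
      rw [← hSp] at this
      exact this
    · intro _ p
      exact hZ _ _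
    · simp only [P]
      rw [Matrix.det_transpose]
      intro h0
      apply aux_det_M n
      apply hi
      rw [map_zero, ← h0, RingHom.map_det]
      rfl
    · ext u p
      rw [Matrix.mul_apply]
      simp only [Q, Z, auxZ, Matrix.map_apply,
        Matrix.sum_apply, Matrix.smul_apply, smul_eq_mul, map_sum, map_mul]
      rfl
  have hR : ∀ p : auxR n, i p ∈ F := by
    intro p
    induction p using MvPolynomial.induction_on with
    | C a =>
      have : i (C a) = algebraMap ℂ K a := (IsScalarTower.algebraMap_apply ℂ (auxR n) K a).symm
      rw [this]
      exact F.algebraMap_mem a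
    | add p q hp hq => rw [map_add]; exact F.add_mem hp hq
    | mul_X p t hp =>
      rw [map_mul]
      refine F.mul_mem hp ?_
      rcases t with t | t
      · induction t with
        | _ a b => exact hSym a b
      · exact hs t
  intro z
  obtain ⟨a, b, hbn, rfl⟩ := IsFractionRing.div_surjective (A := auxR n) z
  exact F.div_mem (hR a) (hR b)

end GenericPart

/-- The coordinate ring of the commuting variety `C(Sp_{2n})` has Krull dimension
`2n² + 2n = (2n² + n) + n`. -/
theorem krullDim_commutingVariety_Sp (n : ℕ) (hn : 1 ≤ n) :
    ringKrullDim
      (SpRing n ⧸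
        Ideal.span
          ({p | ∃ i j, p = (genX n * genY n - genY n * genX n) i j} ∪
           {p | ∃ i j, p =
              ((genX n)ᵀ * sympJ n (SpRing n) * genX n - sympJ n (SpRing n)) i j} ∪
           {p | ∃ i j, p =
              ((genY n)ᵀ * sympJ n (SpRing n) * genY n - sympJ n (SpRing n)) i j})) =
    ((2 * n ^ 2 + 2 * n : ℕ) : WithBot (WithTop ℕ)) := by
  change ringKrullDim (SpRing n ⧸ auxI n) = _
  have hlow := aux_lower_krull n
  have hA : Nontrivial (SpRing n ⧸ auxI n) := by
    by_contra h
    have h' := not_nontrivial_iff_subsingleton.1 h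
    rw [ringKrullDim_eq_bot_of_subsingleton, le_bot_iff] at hlow
    exact WithBot.coe_ne_bot hlow
  exact le_antisymm (aux_upper_krull n hA) hlow
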